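/- Let C be a semisimple tensor category containing pairwise non-isomorphic Fibonacci objects a, b, c satisfying the three braid relations a⊗b⊗a ≅ b⊗a⊗b, b⊗c⊗b ≅ c⊗b⊗c, and a⊗c⊗a ≅ c⊗a⊗c. Then for every n ≥ 1 the following six non-isomorphisms hold (where a cyclic word of length 0 is the tensor unit): A_n ≇ b⊗A_{n−1}, B_n ≇ c⊗B_{n−1}, C_n ≇ a⊗C_{n−1}, A'_n ≇ c⊗A'_{n−1}, B'_n ≇ a⊗B'_{n−1}, and C'_n ≇ b⊗C'_{n−1}. -/

import Mathlib

/-! The Grothendieck-ring argument behind the theorem. Let `a`, `b` satisfy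
`a * a = 1 + a`, `b * b = 1 + b` and `a * b * a = b * a * b`,
and suppose `a * b * U = b * a * b * D`. Multiplying by `a` gives
`b * U + a * b * U = b * a * D + b * a * b * D`, so `b * U = b * a * D`; multiplying by `b` gives
`U + b * U = a * D + b * a * D`, so `U = a * D`. When `a * b * U` is the cyclic word of length `n + 3`
starting at `a` and `b * a * b * D` its shift, `U = a * D` is the same kind of isomorphism for the word
of length `n + 1` starting at `c` (`shift_step`). Hence a two-step induction (`word_aux`) reduces
everything to lengths one and two; `a * b = b * a` gives `b + a * b = a + b * a`, hence `a = b`.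

Two facts turn this into a proof about objects. Tensoring distributes over `⊞`, because in a rigid
category the functors `X ⊗ -` and `- ⊗ X` are left adjoints. And `X` can be cancelled from
`X ⊞ Y ≅ X ⊞ Z` (`biprod_cancel`): `End X` is a finite-dimensional algebra over an algebraically
closed field, so it has stable range one (`stableRange_of_finiteDimensional`). This allows a change of
the isomorphism by a unipotent automorphism after which its component `X ⟶ X` is invertible, and
then Gaussian elimination yields `Y ≅ Z`. Stable range one holds modulo the Jacobson radical, where
the algebra is a product of matrix algebras and so is unit-regular, and units lift along the
nilpotent radical. -/

open CategoryTheory CategoryTheory.Limits CategoryTheory.MonoidalCategory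

universe v u

attribute [local instance] CategoryTheory.Limits.hasBinaryBiproducts_of_finite_biproducts

/-- Every object decomposes as a finite biproduct of simple objects. -/
def IsSemisimple (C : Type u) [Category.{v} C] [Preadditive C]
    [HasFiniteBiproducts C] : Prop :=
  ∀ X : C, ∃ (n : ℕ) (f : Fin n → C), (∀ i, Simple (f i)) ∧ Nonempty (X ≅ ⨁ f)

/-- Finitely many isomorphism classes of simple objects. -/
def FiniteRank (C : Type u) [Category.{v} C] [Preadditive C] : Prop :=
  ∃ (n : ℕ) (S : Fin n → C), ∀ X : C, Simple X → ∃ i, Nonempty (X ≅ S i)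

/-- A Fibonacci object: simple, self-dual, with `τ ⊗ τ ≅ 𝟙 ⊞ τ`. -/
def IsFibonacci {C : Type u} [Category.{v} C] [MonoidalCategory C] [Preadditive C]
    [HasFiniteBiproducts C] [RigidCategory C] (τ : C) : Prop :=
  Simple τ ∧ Nonempty (τ ≅ τᘁ) ∧ Nonempty (τ ⊗ τ ≅ 𝟙_ C ⊞ τ)

/-- The cyclic word of length `n` starting at `a` and following the cycle
`a → b → c → a`; `cyclicWord 0 a b c` is the tensor unit. -/
def cyclicWord {C : Type u} [Category.{v} C] [MonoidalCategory C] :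
    ℕ → C → C → C → C
  | 0, _, _, _ => 𝟙_ C
  | n + 1, a, b, c => a ⊗ cyclicWord n b c a

/-! ### Stable range one for finite-dimensional algebras -/

/-- A ring is unit-regular if every element `a` has a unit `v` as an inner inverse: `a v a = a`. -/
def UnitRegular (R : Type*) [Ring R] : Prop :=
  ∀ a : R, ∃ v : Rˣ, a * v * a = a

/-- The ring `R` has stable range one: if `a x + b = 1`, then some `a + b y` is a unit. -/
def StableRangeOne (R : Type*) [Ring R] : Prop :=
  ∀ a x b : R, a * x + b = 1 → ∃ y, IsUnit (a + b * y)

theorem UnitRegular.stableRangeOne {R : Type*} [Ring R] (h : UnitRegular R) :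
    StableRangeOne R := by
  intro a x b hab
  obtain ⟨v, hv⟩ := h a
  -- `e = v a` is idempotent, and `v (a + b y) = 1 + e v b v⁻¹ (1 - e)` for `y = v⁻¹ (1 - e)`.
  set e : R := v * a with he
  have hee : e * e = e := by
    rw [he, mul_assoc, ← mul_assoc a, hv]
  have h1 : (1 - e) * (v * b * ↑v⁻¹) = 1 - e := by
    have : (v : R) * b * ↑v⁻¹ = 1 - e * (x * ↑v⁻¹) := by
      have hb : b = 1 - a * x := by rw [← hab]; abel
      rw [hb, he]
      simp [mul_sub, sub_mul, mul_assoc]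
    rw [this, mul_sub, mul_one, ← mul_assoc (1 - e) e, sub_mul, hee]
    simp
  set t : R := v * b * ↑v⁻¹ with ht
  refine ⟨↑v⁻¹ * (1 - e), ?_⟩
  have key : (v : R) * (a + b * (↑v⁻¹ * (1 - e))) = 1 + e * t * (1 - e) := by
    have h3 : (v : R) * (a + b * (↑v⁻¹ * (1 - e))) = e + t * (1 - e) := by
      rw [ht, he]; noncomm_ring
    have h4 : t = (1 - e) + e * t := by
      rw [← h1]; noncomm_ring
    have h5 : (1 - e) * (1 - e) = 1 - e := by
      rw [mul_sub, mul_one, sub_mul, hee]; simp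
    calc _ = e + t * (1 - e) := h3
      _ = e + ((1 - e) + e * t) * (1 - e) := by rw [← h4]
      _ = _ := by rw [add_mul, h5]; abel
  have hnil : IsNilpotent (e * t * (1 - e)) := by
    refine ⟨2, ?_⟩
    have : (1 - e) * e = 0 := by rw [sub_mul, hee]; simp
    rw [pow_two, show e * t * (1 - e) * (e * t * (1 - e)) = e * t * ((1 - e) * e) * t * (1 - e) by
      noncomm_ring, this]
    simp
  have hu : IsUnit ((v : R) * (a + b * (↑v⁻¹ * (1 - e)))) := key ▸ hnil.isUnit_one_add
  exact (Units.isUnit_units_mul v _).1 hu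

theorem unitRegular_matrix (K : Type*) [Field K] (n : ℕ) :
    UnitRegular (Matrix (Fin n) (Fin n) K) := by
  intro M
  classical
  -- `M = P D Q` with `P`, `Q` invertible and `D` diagonal; invert the nonzero entries of `D`.
  obtain ⟨L, L', D, hM⟩ := Matrix.Pivot.exists_list_transvec_mul_diagonal_mul_list_transvec M
  have hP : IsUnit (L.map Matrix.TransvectionStruct.toMatrix).prod := by
    rw [Matrix.isUnit_iff_isUnit_det]; simp
  have hQ : IsUnit (L'.map Matrix.TransvectionStruct.toMatrix).prod := by
    rw [Matrix.isUnit_iff_isUnit_det]; simp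
  obtain ⟨P, hP⟩ := hP
  obtain ⟨Q, hQ⟩ := hQ
  rw [← hP, ← hQ] at hM
  have hE : IsUnit (Matrix.diagonal fun i => if D i = 0 then 1 else (D i)⁻¹) := by
    rw [Matrix.isUnit_diagonal, Pi.isUnit_iff]
    intro i
    by_cases h : D i = 0 <;> simp [h]
  obtain ⟨E, hE⟩ := hE
  have hD : Matrix.diagonal D * (E : Matrix (Fin n) (Fin n) K) * Matrix.diagonal D
      = Matrix.diagonal D := by
    rw [hE, Matrix.diagonal_mul_diagonal, Matrix.diagonal_mul_diagonal]
    congr 1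
    funext i
    by_cases h : D i = 0 <;> simp [h]
  refine ⟨Q⁻¹ * E * P⁻¹, ?_⟩
  rw [hM]
  simp only [Units.val_mul, mul_assoc, Units.inv_mul_cancel_left, Units.mul_inv_cancel_left]
  simp only [← mul_assoc] at hD ⊢
  simp only [mul_assoc] at hD ⊢
  rw [← mul_assoc (E : Matrix (Fin n) (Fin n) K), ← mul_assoc (Matrix.diagonal D), hD]

theorem UnitRegular.pi {ι : Type*} {R : ι → Type*} [∀ i, Ring (R i)]
    (h : ∀ i, UnitRegular (R i)) : UnitRegular (∀ i, R i) := by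
  intro a
  choose v hv using fun i => h i (a i)
  exact ⟨MulEquiv.piUnits.symm v, funext fun i => hv i⟩

theorem UnitRegular.of_ringEquiv {R S : Type*} [Ring R] [Ring S] (e : R ≃+* S)
    (h : UnitRegular S) : UnitRegular R := by
  intro a
  obtain ⟨v, hv⟩ := h (e a)
  refine ⟨Units.map e.symm.toMonoidHom v, e.injective ?_⟩
  simpa using hv

/-- Units lift along a surjection with nilpotent kernel, hence so does stable range one. -/
theorem StableRangeOne.of_surjective {R S : Type*} [Ring R] [Ring S] (f : R →+* S)
    (hf : Function.Surjective f) (hker : ∀ r, f r = 0 → IsNilpotent r)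
    (h : StableRangeOne S) : StableRangeOne R := by
  have hone : ∀ r, f r = 1 → IsUnit r := fun r hr => by
    have := (hker (r - 1) (by simp [hr])).isUnit_one_add
    simpa using this
  intro a x b hab
  obtain ⟨y, hy⟩ := h (f a) (f x) (f b) (by rw [← map_mul, ← map_add, hab, map_one])
  obtain ⟨y, rfl⟩ := hf y
  refine ⟨y, ?_⟩
  rw [← map_mul, ← map_add] at hy
  generalize a + b * y = r at hy
  obtain ⟨u, hu⟩ := hy
  obtain ⟨s, hs⟩ := hf ↑u⁻¹
  have h1 : IsUnit (r * s) := hone _ (by rw [map_mul, hs, ← hu, Units.mul_inv])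
  have h2 : IsUnit (s * r) := hone _ (by rw [map_mul, hs, ← hu, Units.inv_mul])
  obtain ⟨u₁, hu₁⟩ := h1
  obtain ⟨u₂, hu₂⟩ := h2
  exact isUnit_iff_exists_and_exists.2
    ⟨⟨s * ↑u₁⁻¹, by rw [← mul_assoc, ← hu₁, Units.mul_inv]⟩,
      ⟨↑u₂⁻¹ * s, by rw [mul_assoc, ← hu₂, Units.inv_mul]⟩⟩

theorem stableRange_of_finiteDimensional (K R : Type*) [Field K] [IsAlgClosed K] [Ring R]
    [Algebra K R] [FiniteDimensional K R] : StableRangeOne R := by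
  have : IsArtinianRing R := IsArtinianRing.of_finite K R
  obtain ⟨n, d, -, ⟨e⟩⟩ := IsSemisimpleRing.exists_algEquiv_pi_matrix_of_isAlgClosed K
    (R ⧸ Ring.jacobson R)
  refine StableRangeOne.of_surjective (Ideal.Quotient.mk (Ring.jacobson R))
    Ideal.Quotient.mk_surjective ?_
    (UnitRegular.of_ringEquiv e.toRingEquiv
      (UnitRegular.pi fun i => unitRegular_matrix K (d i))).stableRangeOne
  intro r hr
  obtain ⟨k, hk⟩ := IsSemiprimaryRing.isNilpotent (R := R)
  refine ⟨k, ?_⟩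
  have := Ideal.pow_mem_pow (Ideal.Quotient.eq_zero_iff_mem.1 hr) k
  rwa [hk] at this

/-! ### Cancellation for biproducts -/

section Cancellation

variable {C : Type u} [Category.{v} C] [Preadditive C] [HasFiniteBiproducts C]

theorem biprod_cancel [Linear ℂ C] (hfd : ∀ X Y : C, FiniteDimensional ℂ (X ⟶ Y)) {X Y Z : C}
    (h : Nonempty (X ⊞ Y ≅ X ⊞ Z)) : Nonempty (Y ≅ Z) := by
  obtain ⟨f⟩ := h
  have : FiniteDimensional ℂ (End X) := hfd X X
  -- Multiplication in `End X` is composition in reverse order.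
  let a : End X := biprod.inl ≫ f.hom ≫ biprod.fst
  let x : End X := biprod.inl ≫ f.inv ≫ biprod.fst
  let p : X ⟶ Y := biprod.inl ≫ f.inv ≫ biprod.snd
  let q : Y ⟶ X := biprod.inr ≫ f.hom ≫ biprod.fst
  let b : End X := p ≫ q
  have hab : a * x + b = 1 := by
    have h : (biprod.inl : X ⟶ X ⊞ Z) ≫
        f.inv ≫ (biprod.fst ≫ biprod.inl + biprod.snd ≫ biprod.inr) ≫ f.hom ≫ biprod.fst
        = 𝟙 X := by
      rw [biprod.total]; simp
    simp only [Preadditive.add_comp, Preadditive.comp_add, Category.assoc] at h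
    simpa [a, x, b, p, q, End.mul_def, End.one_def] using h
  obtain ⟨y, hy⟩ := stableRange_of_finiteDimensional ℂ (End X) a x b hab
  let g : X ⊞ Y ≅ X ⊞ Z := Biprod.unipotentUpper (y ≫ p : X ⟶ Y) ≪≫ f
  have hg : biprod.inl ≫ g.hom ≫ biprod.fst = a + b * y := by
    simp [g, a, b, q, End.mul_def, Biprod.ofComponents]
  have : IsIso (biprod.inl ≫ g.hom ≫ biprod.fst) := by
    rw [hg]
    exact (isUnit_iff_isIso _).1 hy
  exact ⟨Biprod.isoElim g⟩

/-- If `W ⊞ Y ≅ W' ⊞ Z` and `Y ≅ Z`, then `W ≅ W'`. -/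
theorem cancel_right [Linear ℂ C] (hfd : ∀ X Y : C, FiniteDimensional ℂ (X ⟶ Y)) {W W' Y Z : C}
    (e : W ⊞ Y ≅ W' ⊞ Z) (d : Y ≅ Z) : Nonempty (W ≅ W') :=
  biprod_cancel hfd (X := Z)
    ⟨biprod.mapIso d.symm (Iso.refl W) ≪≫ biprod.braiding Y W ≪≫ e ≪≫ biprod.braiding W' Z⟩

end Cancellation

/-! ### Cyclic words -/

theorem braid_tensor {C : Type u} [Category.{v} C] [MonoidalCategory C] {a b : C}
    (h : Nonempty (a ⊗ b ⊗ a ≅ b ⊗ a ⊗ b)) (W : C) :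
    Nonempty (a ⊗ b ⊗ a ⊗ W ≅ b ⊗ a ⊗ b ⊗ W) := by
  obtain ⟨e⟩ := h
  exact ⟨whiskerLeftIso a (α_ b a W).symm ≪≫ (α_ a (b ⊗ a) W).symm ≪≫ whiskerRightIso e W ≪≫
    α_ b (a ⊗ b) W ≪≫ whiskerLeftIso b (α_ a b W)⟩

section Words

variable {C : Type u} [Category.{v} C] [MonoidalCategory C] [Preadditive C]
  [HasFiniteBiproducts C] [RigidCategory C]

theorem tensor_biprod (X Y Z : C) : Nonempty (X ⊗ (Y ⊞ Z) ≅ (X ⊗ Y) ⊞ (X ⊗ Z)) := by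
  have : (tensorLeft X).IsLeftAdjoint :=
    (tensorLeftAdjunction (ᘁX) X).isLeftAdjoint
  have := preservesBinaryBiproducts_of_preservesBinaryCoproducts (tensorLeft X)
  exact ⟨(tensorLeft X).mapBiprod Y Z⟩

theorem biprod_tensor (X Y Z : C) : Nonempty ((X ⊞ Y) ⊗ Z ≅ (X ⊗ Z) ⊞ (Y ⊗ Z)) := by
  have : (tensorRight Z).IsLeftAdjoint :=
    (tensorRightAdjunction Z (Zᘁ)).isLeftAdjoint
  have := preservesBinaryBiproducts_of_preservesBinaryCoproducts (tensorRight Z)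
  exact ⟨(tensorRight Z).mapBiprod X Y⟩

theorem IsFibonacci.tensor_self {τ : C} (h : IsFibonacci τ) (W : C) :
    Nonempty (τ ⊗ τ ⊗ W ≅ W ⊞ (τ ⊗ W)) := by
  obtain ⟨-, -, ⟨e⟩⟩ := h
  obtain ⟨d⟩ := biprod_tensor (𝟙_ C) τ W
  exact ⟨(α_ τ τ W).symm ≪≫ whiskerRightIso e W ≪≫ d ≪≫ biprod.mapIso (λ_ W) (Iso.refl _)⟩

variable [Linear ℂ C]

/-- For `W = 𝟙_ C` and up to unitors: if `a` and `b` commute, then `b ≅ a`. -/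
theorem iso_of_commute (hfd : ∀ X Y : C, FiniteDimensional ℂ (X ⟶ Y)) {a b : C}
    (ha : IsFibonacci a) (hb : IsFibonacci b) (hbr : Nonempty (a ⊗ b ⊗ a ≅ b ⊗ a ⊗ b)) {W : C}
    (h : Nonempty (a ⊗ b ⊗ W ≅ b ⊗ a ⊗ W)) : Nonempty (b ⊗ W ≅ a ⊗ W) := by
  obtain ⟨e⟩ := h
  obtain ⟨r⟩ := braid_tensor hbr W
  obtain ⟨s⟩ := ha.tensor_self (b ⊗ W)
  obtain ⟨t⟩ := hb.tensor_self (a ⊗ W)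
  exact cancel_right hfd
    (s.symm ≪≫ whiskerLeftIso a e ≪≫ r ≪≫ whiskerLeftIso b e ≪≫ t) e

/-- The step of the induction, lowering the length of the words by two. -/
theorem shift_step (hfd : ∀ X Y : C, FiniteDimensional ℂ (X ⟶ Y)) {a b : C}
    (ha : IsFibonacci a) (hb : IsFibonacci b) (hbr : Nonempty (a ⊗ b ⊗ a ≅ b ⊗ a ⊗ b)) {U D : C}
    (h : Nonempty (a ⊗ b ⊗ U ≅ b ⊗ a ⊗ b ⊗ D)) : Nonempty (U ≅ a ⊗ D) := by
  obtain ⟨e⟩ := h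
  obtain ⟨r⟩ := braid_tensor hbr (b ⊗ D)
  obtain ⟨s⟩ := ha.tensor_self (b ⊗ U)
  obtain ⟨t⟩ := hb.tensor_self D
  obtain ⟨d₁⟩ := tensor_biprod a D (b ⊗ D)
  obtain ⟨d₂⟩ := tensor_biprod b (a ⊗ D) (a ⊗ b ⊗ D)
  obtain ⟨e'⟩ := cancel_right hfd
    (s.symm ≪≫ whiskerLeftIso a e ≪≫ r ≪≫
      whiskerLeftIso b (whiskerLeftIso a t ≪≫ d₁) ≪≫ d₂) e
  obtain ⟨s'⟩ := hb.tensor_self U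
  obtain ⟨t'⟩ := hb.tensor_self (a ⊗ D)
  exact cancel_right hfd (s'.symm ≪≫ whiskerLeftIso b e' ≪≫ t') e'

/-- The shift lemma for one word. The braid relations are stated along the cycle
`a → b → c → a`, so that the hypotheses are invariant under rotating the triple. -/
theorem word_aux (hfd : ∀ X Y : C, FiniteDimensional ℂ (X ⟶ Y)) :
    ∀ (n : ℕ) (a b c : C), IsFibonacci a → IsFibonacci b → IsFibonacci c →
      ¬ Nonempty (a ≅ b) → ¬ Nonempty (b ≅ c) → ¬ Nonempty (c ≅ a) →
      Nonempty (a ⊗ b ⊗ a ≅ b ⊗ a ⊗ b) → Nonempty (b ⊗ c ⊗ b ≅ c ⊗ b ⊗ c) →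
      Nonempty (c ⊗ a ⊗ c ≅ a ⊗ c ⊗ a) →
      ¬ Nonempty (cyclicWord (n + 1) a b c ≅ b ⊗ cyclicWord n a b c)
  | 0, a, b, c => fun _ _ _ hab _ _ _ _ _ ⟨e⟩ => hab ⟨(ρ_ a).symm ≪≫ e ≪≫ ρ_ b⟩
  | 1, a, b, c => fun ha hb _ hab _ _ hbr _ _ h => by
    obtain ⟨e⟩ := iso_of_commute hfd ha hb hbr (W := 𝟙_ C) h
    exact hab ⟨(ρ_ a).symm ≪≫ e.symm ≪≫ ρ_ b⟩
  | n + 2, a, b, c => fun ha hb hc hab hbc hca h₁ h₂ h₃ h =>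
    word_aux hfd n c a b hc ha hb hca hab hbc h₃ h₁ h₂
      (shift_step hfd ha hb h₁ (U := cyclicWord (n + 1) c a b) (D := cyclicWord n c a b) h)

end Words

/-- Lemma 4.4 (shift lemma): with pairwise non-isomorphic Fibonacci objects `a, b, c`
satisfying the three braid relations, no cyclic word of length `n` is isomorphic to the
"shifted" word of the same length (a cyclic word of length 0 being the tensor unit). -/
theorem cyclic_word_shift (C : Type u) [Category.{v} C] [MonoidalCategory C]
    [Preadditive C] [Linear ℂ C] [HasFiniteBiproducts C] [RigidCategory C]
    [Simple (𝟙_ C)]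
    (hfd : ∀ X Y : C, FiniteDimensional ℂ (X ⟶ Y))
    (hss : IsSemisimple C)
    (a b c : C) (ha : IsFibonacci a) (hb : IsFibonacci b) (hc : IsFibonacci c)
    (hab : ¬ Nonempty (a ≅ b)) (hbc : ¬ Nonempty (b ≅ c)) (hac : ¬ Nonempty (a ≅ c))
    (hbr₁ : Nonempty (a ⊗ b ⊗ a ≅ b ⊗ a ⊗ b))
    (hbr₂ : Nonempty (b ⊗ c ⊗ b ≅ c ⊗ b ⊗ c))
    (hbr₃ : Nonempty (a ⊗ c ⊗ a ≅ c ⊗ a ⊗ c)) :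
    ∀ n : ℕ,
      ¬ Nonempty (cyclicWord (n + 1) a b c ≅ b ⊗ cyclicWord n a b c) ∧
      ¬ Nonempty (cyclicWord (n + 1) b c a ≅ c ⊗ cyclicWord n b c a) ∧
      ¬ Nonempty (cyclicWord (n + 1) c a b ≅ a ⊗ cyclicWord n c a b) ∧
      ¬ Nonempty (cyclicWord (n + 1) a c b ≅ c ⊗ cyclicWord n a c b) ∧
      ¬ Nonempty (cyclicWord (n + 1) b a c ≅ a ⊗ cyclicWord n b a c) ∧
      ¬ Nonempty (cyclicWord (n + 1) c b a ≅ b ⊗ cyclicWord n c b a) := by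
  have sy : ∀ {X Y : C}, Nonempty (X ≅ Y) → Nonempty (Y ≅ X) := fun ⟨e⟩ => ⟨e.symm⟩
  have hba : ¬ Nonempty (b ≅ a) := fun h => hab (sy h)
  have hcb : ¬ Nonempty (c ≅ b) := fun h => hbc (sy h)
  have hca : ¬ Nonempty (c ≅ a) := fun h => hac (sy h)
  have s₁ := sy hbr₁
  have s₂ := sy hbr₂
  have s₃ := sy hbr₃
  exact fun n =>
    ⟨word_aux hfd n a b c ha hb hc hab hbc hca hbr₁ hbr₂ s₃,
      word_aux hfd n b c a hb hc ha hbc hca hab hbr₂ s₃ hbr₁,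
      word_aux hfd n c a b hc ha hb hca hab hbc s₃ hbr₁ hbr₂,
      word_aux hfd n a c b ha hc hb hac hcb hba hbr₃ s₂ s₁,
      word_aux hfd n b a c hb ha hc hba hac hcb s₁ hbr₃ s₂,
      word_aux hfd n c b a hc hb ha hcb hba hac s₂ s₁ hbr₃⟩
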